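/- There exists an absolute constant C > 0 for which the following holds. Let β₁ ≥ β₂ ≥ … ≥ β_d > 0, let Ψ be the associated SLOPE norm on ℝ^d, let G be a standard Gaussian vector in ℝ^d, and let ρ, r > 0. Then for every k ∈ {1, …, d}, E sup{ ⟨G, w⟩ : Ψ(w) ≤ ρ, ‖w‖₂ ≤ r } ≤ C·( r·√((k−1)·log(ed/(k−1))) + ρ·max_{k ≤ i ≤ d} √(log(ed/i))/β_i ), where for k = 1 the first term is taken to be 0. -/

import Mathlib

open MeasureTheory ProbabilityTheory

/-- The Euclidean (`ℓ₂`) norm on `ℝ^d`. -/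
noncomputable def l2norm {d : ℕ} (t : Fin d → ℝ) : ℝ := Real.sqrt (∑ i, (t i) ^ 2)

/-- The standard inner product on `ℝ^d`. -/
noncomputable def iprod {d : ℕ} (x y : Fin d → ℝ) : ℝ := ∑ i, x i * y i

/-- The nonincreasing rearrangement of `(|t_i|)_{i=1}^d`. -/
noncomputable def sharpOrd {d : ℕ} (t : Fin d → ℝ) : Fin d → ℝ :=
  fun i => |t (Tuple.sort (fun j => |t j|) i.rev)|

/-- The SLOPE norm `Ψ(t) = ∑ β_i t_i^♯` associated with weights `β`. -/
noncomputable def slopeNorm {d : ℕ} (β t : Fin d → ℝ) : ℝ := ∑ i, β i * sharpOrd t i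

theorem sharpOrd_antitone {d : ℕ} (t : Fin d → ℝ) : Antitone (sharpOrd t) := fun _ _ hij =>
  Tuple.monotone_sort (fun l => |t l|) (Fin.rev_le_rev.mpr hij)

theorem sharpOrd_nonneg {d : ℕ} (t : Fin d → ℝ) (i : Fin d) : 0 ≤ sharpOrd t i := abs_nonneg _

/-- The permutation realizing the nonincreasing rearrangement. -/
noncomputable def sharpPerm {d : ℕ} (t : Fin d → ℝ) : Equiv.Perm (Fin d) :=
  Fin.revPerm.trans (Tuple.sort (fun j => |t j|))

theorem sharpOrd_eq_abs_sharpPerm {d : ℕ} (t : Fin d → ℝ) (i : Fin d) :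
    sharpOrd t i = |t (sharpPerm t i)| := rfl

theorem sum_comp_sharpOrd {d : ℕ} (t : Fin d → ℝ) (f : ℝ → ℝ) :
    ∑ i, f (sharpOrd t i) = ∑ i, f |t i| :=
  Equiv.sum_comp (sharpPerm t) fun i => f |t i|

/-- The rearrangement inequality. -/
theorem iprod_le_sum_sharpOrd {d : ℕ} (x y : Fin d → ℝ) :
    iprod x y ≤ ∑ i, sharpOrd x i * sharpOrd y i := by
  have hmono : Monovary (sharpOrd x) (sharpOrd y) :=
    (sharpOrd_antitone x).monovary (sharpOrd_antitone y)
  calc iprod x y ≤ ∑ i, |x i| * |y i| :=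
        Finset.sum_le_sum fun i _ => (le_abs_self _).trans (abs_mul _ _).le
    _ = ∑ i, |x (sharpPerm x i)| * |y (sharpPerm x i)| :=
        (Equiv.sum_comp (sharpPerm x) fun i => |x i| * |y i|).symm
    _ = ∑ i, sharpOrd x i * sharpOrd y (((sharpPerm x).trans (sharpPerm y).symm) i) := by
        simp [sharpOrd_eq_abs_sharpPerm]
    _ ≤ _ := hmono.sum_mul_comp_perm_le_sum_mul

/-- The empirical exponential moment controlling all order statistics at once. -/
noncomputable def expMean {d : ℕ} (x : Fin d → ℝ) : ℝ := (∑ j, Real.exp (x j ^ 2 / 4)) / d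

theorem one_le_expMean {d : ℕ} (hd : 0 < d) (x : Fin d → ℝ) : 1 ≤ expMean x := by
  have hd' : (0 : ℝ) < d := by exact_mod_cast hd
  rw [expMean, le_div_iff₀ hd', one_mul]
  calc (d : ℝ) = ∑ _j : Fin d, (1 : ℝ) := by simp
    _ ≤ _ := Finset.sum_le_sum fun j _ => Real.one_le_exp (by positivity)

theorem succ_mul_exp_sharpOrd_le {d : ℕ} (x : Fin d → ℝ) (i : Fin d) :
    ((i : ℝ) + 1) * Real.exp (sharpOrd x i ^ 2 / 4) ≤ ∑ j, Real.exp (x j ^ 2 / 4) := by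
  calc ((i : ℝ) + 1) * Real.exp (sharpOrd x i ^ 2 / 4)
      = ∑ _j ∈ Finset.Iic i, Real.exp (sharpOrd x i ^ 2 / 4) := by simp
    _ ≤ ∑ j ∈ Finset.Iic i, Real.exp (sharpOrd x j ^ 2 / 4) := by
        refine Finset.sum_le_sum fun j hj => ?_
        have h1 := sharpOrd_antitone x (Finset.mem_Iic.mp hj)
        have h2 := sharpOrd_nonneg x i
        gcongr
    _ ≤ ∑ j, Real.exp (sharpOrd x j ^ 2 / 4) :=
        Finset.sum_le_univ_sum_of_nonneg fun j => (Real.exp_pos _).le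
    _ = ∑ j, Real.exp (x j ^ 2 / 4) := by
        rw [sum_comp_sharpOrd x fun s => Real.exp (s ^ 2 / 4)]
        simp only [sq_abs]

theorem one_le_log_exp_mul_div {d : ℕ} {s : ℝ} (hs : 0 < s) (hsd : s ≤ d) :
    1 ≤ Real.log (Real.exp 1 * d / s) := by
  have h : (1 : ℝ) ≤ d / s := (one_le_div hs).mpr hsd
  rw [mul_div_assoc, Real.log_mul (Real.exp_pos 1).ne' (by positivity), Real.log_exp]
  linarith [Real.log_nonneg h]

theorem sharpOrd_le_expMean_mul_sqrt {d : ℕ} (x : Fin d → ℝ) (i : Fin d) :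
    sharpOrd x i ≤
      2 * expMean x * Real.sqrt (Real.log (Real.exp 1 * (d : ℝ) / ((i : ℕ) + 1))) := by
  have hd : 0 < d := i.pos
  have hd' : (0 : ℝ) < d := by exact_mod_cast hd
  have hi : (0 : ℝ) < (i : ℝ) + 1 := by positivity
  have hid : (i : ℝ) + 1 ≤ d := by exact_mod_cast i.isLt
  have hT := one_le_expMean hd x
  have hL := one_le_log_exp_mul_div hi hid
  set T := expMean x with hTdef
  set L := Real.log (Real.exp 1 * (d : ℝ) / ((i : ℕ) + 1)) with hLdef
  have hLeq : L = 1 + Real.log (d / ((i : ℝ) + 1)) := by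
    rw [hLdef, mul_div_assoc, Real.log_mul (Real.exp_pos 1).ne' (by positivity), Real.log_exp]
  have hexp : Real.exp (sharpOrd x i ^ 2 / 4) ≤ d / ((i : ℝ) + 1) * T := by
    rw [div_mul_eq_mul_div, le_div_iff₀ hi, mul_comm, hTdef, expMean, mul_div_cancel₀ _ hd'.ne']
    exact succ_mul_exp_sharpOrd_le x i
  have hlog : sharpOrd x i ^ 2 / 4 ≤ Real.log (d / ((i : ℝ) + 1)) + Real.log T := by
    rw [← Real.log_mul (by positivity) (by positivity)]
    exact (Real.le_log_iff_exp_le (by positivity)).mpr hexp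
  have hlogT : Real.log T ≤ T - 1 := Real.log_le_sub_one_of_pos (by linarith)
  have hsq : sharpOrd x i ^ 2 ≤ (2 * T) ^ 2 * L := by
    have hT2 : T ≤ T ^ 2 := le_self_pow₀ hT two_ne_zero
    nlinarith [mul_nonneg (sub_nonneg.mpr hL) (by linarith : 0 ≤ T ^ 2 - 1)]
  calc sharpOrd x i ≤ Real.sqrt ((2 * T) ^ 2 * L) := Real.le_sqrt_of_sq_le hsq
    _ = 2 * T * Real.sqrt L := by
        rw [Real.sqrt_mul (by positivity), Real.sqrt_sq (by positivity)]

theorem sum_range_log_le {d m : ℕ} (hm : m ≤ d) :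
    ∑ i ∈ Finset.range m, Real.log (Real.exp 1 * (d : ℝ) / ((i : ℝ) + 1)) ≤
      2 * (m * Real.log (Real.exp 1 * (d : ℝ) / m)) := by
  rcases Nat.eq_zero_or_pos m with rfl | hm0
  · simp
  have hm' : (0 : ℝ) < m := by exact_mod_cast hm0
  have hmd : (m : ℝ) ≤ d := by exact_mod_cast hm
  have hd : (0 : ℝ) < Real.exp 1 * d := mul_pos (Real.exp_pos 1) (hm'.trans_le hmd)
  have hfact : ∑ i ∈ Finset.range m, Real.log ((i : ℝ) + 1) = Real.log (m.factorial) := by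
    rw [← Finset.prod_range_add_one_eq_factorial, Nat.cast_prod, Real.log_prod]
    · simp
    · intro i _
      positivity
  have hstirling : m * Real.log m - Real.log (m.factorial) ≤ m := by
    have h := Real.pow_div_factorial_le_exp (m : ℝ) hm'.le m
    have hf : (0 : ℝ) < m.factorial := by exact_mod_cast m.factorial_pos
    have h2 := Real.log_le_log (by positivity) h
    rwa [Real.log_exp, Real.log_div (by positivity) hf.ne', Real.log_pow] at h2
  have hsum : ∑ i ∈ Finset.range m, Real.log (Real.exp 1 * (d : ℝ) / ((i : ℝ) + 1)) =
      m * Real.log (Real.exp 1 * d) - Real.log (m.factorial) := by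
    rw [← hfact, Finset.sum_congr rfl fun i _ => Real.log_div hd.ne' (by positivity),
      Finset.sum_sub_distrib]
    simp
  have hL := one_le_log_exp_mul_div hm' hmd
  rw [hsum]
  rw [Real.log_div hd.ne' hm'.ne'] at hL ⊢
  nlinarith

theorem sum_sharpOrd_head_le {d : ℕ} (x w : Fin d → ℝ) {r : ℝ} (hw : l2norm w ≤ r) {k : ℕ}
    (hk : 1 ≤ k) (hkd : k ≤ d) :
    ∑ i : Fin d with ¬ k ≤ (i : Fin d).val + 1, sharpOrd x i * sharpOrd w i ≤
      2 * expMean x * (2 * (r * Real.sqrt (((k : ℝ) - 1) *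
            Real.log (Real.exp 1 * (d : ℝ) / ((k : ℝ) - 1))))) := by
  have hT := one_le_expMean (by omega : 0 < d) x
  obtain ⟨m, rfl⟩ : ∃ m, k = m + 1 := ⟨k - 1, by omega⟩
  have hr : 0 ≤ r := (Real.sqrt_nonneg _).trans hw
  set L : ℕ → ℝ := fun i => Real.log (Real.exp 1 * (d : ℝ) / ((i : ℝ) + 1))
  have hLnonneg : ∀ i : Fin d, 0 ≤ L i := fun i =>
    zero_le_one.trans (one_le_log_exp_mul_div (by positivity) (by exact_mod_cast i.isLt))
  have hsumL : ∑ i : Fin d with ¬ m + 1 ≤ (i : Fin d).val + 1, Real.sqrt (L i) ^ 2 ≤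
      2 * (m * Real.log (Real.exp 1 * (d : ℝ) / m)) := by
    refine le_trans (le_of_eq ?_) (sum_range_log_le (by omega : m ≤ d))
    rw [Finset.sum_congr rfl fun i _ => Real.sq_sqrt (hLnonneg i), Finset.sum_filter,
      Fin.sum_univ_eq_sum_range (fun i => if ¬ m + 1 ≤ i + 1 then L i else 0) d,
      ← Finset.sum_filter]
    refine Finset.sum_congr ?_ fun _ _ => rfl
    ext i
    simp only [Finset.mem_filter, Finset.mem_range]
    omega
  have hsumw : ∑ i : Fin d with ¬ m + 1 ≤ (i : Fin d).val + 1, sharpOrd w i ^ 2 ≤ ∑ i, w i ^ 2 := by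
    refine (Finset.sum_le_univ_sum_of_nonneg fun i => sq_nonneg _).trans (le_of_eq ?_)
    rw [sum_comp_sharpOrd w fun s => s ^ 2]
    simp only [sq_abs]
  have hsqrt2 : Real.sqrt 2 ≤ 2 := by
    rw [Real.sqrt_le_left (by norm_num)]
    norm_num
  calc ∑ i : Fin d with ¬ m + 1 ≤ (i : Fin d).val + 1, sharpOrd x i * sharpOrd w i
      ≤ ∑ i : Fin d with ¬ m + 1 ≤ (i : Fin d).val + 1,
          2 * expMean x * (Real.sqrt (L i) * sharpOrd w i) := by
        refine Finset.sum_le_sum fun i _ => ?_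
        rw [← mul_assoc]
        exact mul_le_mul_of_nonneg_right (sharpOrd_le_expMean_mul_sqrt x i) (sharpOrd_nonneg w i)
    _ = 2 * expMean x *
          ∑ i : Fin d with ¬ m + 1 ≤ (i : Fin d).val + 1, Real.sqrt (L i) * sharpOrd w i := by
        rw [Finset.mul_sum]
    _ ≤ 2 * expMean x * (Real.sqrt (2 * (m * Real.log (Real.exp 1 * (d : ℝ) / m))) * r) := by
        refine mul_le_mul_of_nonneg_left ?_ (by linarith)
        refine (Real.sum_mul_le_sqrt_mul_sqrt _ _ _).trans ?_
        gcongr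
        exact (Real.sqrt_le_sqrt hsumw).trans hw
    _ ≤ _ := by
        refine mul_le_mul_of_nonneg_left ?_ (by linarith)
        rw [Real.sqrt_mul (by norm_num)]
        push_cast
        rw [add_sub_cancel_right]
        have := mul_le_mul_of_nonneg_right hsqrt2 (mul_nonneg
          (Real.sqrt_nonneg (m * Real.log (Real.exp 1 * (d : ℝ) / m))) hr)
        linarith

theorem sum_sharpOrd_tail_le {d : ℕ} {β : Fin d → ℝ} (hβ : ∀ i, 0 < β i) (x w : Fin d → ℝ)
    {ρ : ℝ} (hw : slopeNorm β w ≤ ρ) {k : ℕ} (hk : 1 ≤ k) (hkd : k ≤ d) :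
    ∑ i : Fin d with k ≤ (i : Fin d).val + 1, sharpOrd x i * sharpOrd w i ≤
      2 * expMean x * (ρ * ⨆ i : {i : Fin d // k ≤ (i : ℕ) + 1},
          Real.sqrt (Real.log (Real.exp 1 * (d : ℝ) / ((i.1 : ℕ) + 1))) / β i.1) := by
  have hT := one_le_expMean (by omega : 0 < d) x
  set f : {i : Fin d // k ≤ (i : ℕ) + 1} → ℝ := fun i =>
    Real.sqrt (Real.log (Real.exp 1 * (d : ℝ) / ((i.1 : ℕ) + 1))) / β i.1
  have hM : 0 ≤ ⨆ i, f i := Real.iSup_nonneg fun i => div_nonneg (Real.sqrt_nonneg _) (hβ _).le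
  have hterm : ∀ i : Fin d, k ≤ (i : ℕ) + 1 →
      Real.sqrt (Real.log (Real.exp 1 * (d : ℝ) / ((i : ℕ) + 1))) ≤ (⨆ i, f i) * β i := by
    intro i hi
    rw [← div_le_iff₀ (hβ i)]
    exact le_ciSup (f := f) (Set.finite_range f).bddAbove ⟨i, hi⟩
  calc ∑ i : Fin d with k ≤ (i : Fin d).val + 1, sharpOrd x i * sharpOrd w i
      ≤ ∑ i : Fin d with k ≤ (i : Fin d).val + 1,
          2 * expMean x * ((⨆ i, f i) * (β i * sharpOrd w i)) := by
        refine Finset.sum_le_sum fun i hi => ?_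
        rw [← mul_assoc (⨆ i, f i), ← mul_assoc]
        refine mul_le_mul_of_nonneg_right ((sharpOrd_le_expMean_mul_sqrt x i).trans ?_)
          (sharpOrd_nonneg w i)
        exact mul_le_mul_of_nonneg_left (hterm i (Finset.mem_filter.mp hi).2) (by linarith)
    _ = 2 * expMean x *
          ((⨆ i, f i) * ∑ i : Fin d with k ≤ (i : Fin d).val + 1, β i * sharpOrd w i) := by
        rw [Finset.mul_sum, Finset.mul_sum]
    _ ≤ 2 * expMean x * ((⨆ i, f i) * ρ) := by
        gcongr
        exact (Finset.sum_le_univ_sum_of_nonneg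
          fun i => mul_nonneg (hβ i).le (sharpOrd_nonneg w i)).trans hw
    _ = _ := by rw [mul_comm ρ]

theorem integral_exp_sq_div_four_gaussianReal :
    ∫ x, Real.exp (x ^ 2 / 4) ∂(gaussianReal 0 1) = Real.sqrt 2 := by
  have hpdf : ∀ x : ℝ, gaussianPDFReal 0 1 x • Real.exp (x ^ 2 / 4) =
      (Real.sqrt (2 * Real.pi))⁻¹ * Real.exp (-(1 / 4) * x ^ 2) := by
    intro x
    rw [gaussianPDFReal_def, smul_eq_mul, mul_assoc, ← Real.exp_add]
    simp only [NNReal.coe_one, mul_one, sub_zero]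
    ring_nf
  rw [integral_gaussianReal_eq_integral_smul one_ne_zero]
  simp_rw [hpdf]
  rw [integral_const_mul, integral_gaussian, ← Real.sqrt_inv,
    ← Real.sqrt_mul (by positivity)]
  congr 1
  field_simp
  norm_num

theorem integrable_exp_sq_div_four_gaussianReal :
    Integrable (fun x : ℝ => Real.exp (x ^ 2 / 4)) (gaussianReal 0 1) := by
  refine Integrable.of_integral_ne_zero ?_
  rw [integral_exp_sq_div_four_gaussianReal]
  positivity

section StandardGaussian

variable {d : ℕ} {Ω : Type*} [MeasurableSpace Ω] {P : Measure Ω} {G : Ω → Fin d → ℝ}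

theorem map_eval_eq_gaussianReal (hG : Measurable G)
    (hmap : P.map G = Measure.pi (fun _ : Fin d => gaussianReal 0 1)) (j : Fin d) :
    P.map (fun ω => G ω j) = gaussianReal 0 1 := by
  have h := (measurePreserving_eval (fun _ : Fin d => gaussianReal 0 1) j).map_eq
  rwa [← hmap, Measure.map_map (measurable_pi_apply j) hG] at h

theorem integrable_exp_sq_div_four (hG : Measurable G)
    (hmap : P.map G = Measure.pi (fun _ : Fin d => gaussianReal 0 1)) (j : Fin d) :
    Integrable (fun ω => Real.exp (G ω j ^ 2 / 4)) P := by
  have h := integrable_exp_sq_div_four_gaussianReal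
  rw [← map_eval_eq_gaussianReal hG hmap j] at h
  exact h.comp_measurable ((measurable_pi_apply j).comp hG)

theorem integrable_expMean (hG : Measurable G)
    (hmap : P.map G = Measure.pi (fun _ : Fin d => gaussianReal 0 1)) :
    Integrable (fun ω => expMean (G ω)) P :=
  (integrable_finsetSum _ fun j _ => integrable_exp_sq_div_four hG hmap j).div_const _

theorem integral_expMean (hd : 0 < d) (hG : Measurable G)
    (hmap : P.map G = Measure.pi (fun _ : Fin d => gaussianReal 0 1)) :
    ∫ ω, expMean (G ω) ∂P = Real.sqrt 2 := by
  have hj : ∀ j : Fin d, ∫ ω, Real.exp (G ω j ^ 2 / 4) ∂P = Real.sqrt 2 := by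
    intro j
    rw [← integral_exp_sq_div_four_gaussianReal, ← map_eval_eq_gaussianReal hG hmap j,
      integral_map (by fun_prop) (by fun_prop)]
  have hd' : (d : ℝ) ≠ 0 := by exact_mod_cast hd.ne'
  simp only [expMean]
  rw [integral_div, integral_finsetSum _ fun j _ => integrable_exp_sq_div_four hG hmap j]
  simp [hj, hd']

end StandardGaussian

/-- Lemma 5.3: for the SLOPE norm with nonincreasing positive weights and a
standard Gaussian vector `G` in `ℝ^d`, for every `k ∈ {1, …, d}`,
`𝔼 sup{⟨G,w⟩ : Ψ(w) ≤ ρ, ‖w‖₂ ≤ r} ≤ C (r √((k-1) log(ed/(k-1))) + ρ max_{k ≤ i ≤ d} √(log(ed/i))/β_i)`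
(for `k = 1` the first term is `0`; here the index `i` of `β` is `1`-based, so the
`0`-based index `i : Fin d` corresponds to the `1`-based index `(i : ℕ) + 1`). -/
theorem stmt6 : ∃ C : ℝ, 0 < C ∧
    ∀ (d : ℕ) (β : Fin d → ℝ), Antitone β → (∀ i, 0 < β i) →
    ∀ (Ω : Type) [MeasurableSpace Ω] (P : Measure Ω) [IsProbabilityMeasure P],
    ∀ G : Ω → Fin d → ℝ, Measurable G →
    P.map G = Measure.pi (fun _ : Fin d => gaussianReal 0 1) →
    ∀ ρ r : ℝ, 0 < ρ → 0 < r →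
    ∀ k : ℕ, 1 ≤ k → k ≤ d →
    (∫ ω, sSup ((fun w => iprod (G ω) w) ''
        {w : Fin d → ℝ | slopeNorm β w ≤ ρ ∧ l2norm w ≤ r}) ∂P) ≤
      C * (r * Real.sqrt (((k : ℝ) - 1) *
            Real.log (Real.exp 1 * (d : ℝ) / ((k : ℝ) - 1))) +
        ρ * ⨆ i : {i : Fin d // k ≤ (i : ℕ) + 1},
          Real.sqrt (Real.log (Real.exp 1 * (d : ℝ) / ((i.1 : ℕ) + 1))) / β i.1) := by
  refine ⟨8, by norm_num, ?_⟩
  intro d β _ hβ Ω _ P _ G hG hmap ρ r hρ hr k hk hkd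
  have hd : 0 < d := by omega
  set A : ℝ := r * Real.sqrt (((k : ℝ) - 1) *
    Real.log (Real.exp 1 * (d : ℝ) / ((k : ℝ) - 1))) with hAdef
  set B : ℝ := ρ * ⨆ i : {i : Fin d // k ≤ (i : ℕ) + 1},
    Real.sqrt (Real.log (Real.exp 1 * (d : ℝ) / ((i.1 : ℕ) + 1))) / β i.1 with hBdef
  have hA : 0 ≤ A := by positivity
  have hB : 0 ≤ B := mul_nonneg hρ.le
    (Real.iSup_nonneg fun i => div_nonneg (Real.sqrt_nonneg _) (hβ _).le)
  have hint : Integrable (fun ω => expMean (G ω) * (4 * (A + B))) P :=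
    (integrable_expMean hG hmap).mul_const _
  have hsqrt2 : Real.sqrt 2 ≤ 2 := by
    rw [Real.sqrt_le_left (by norm_num)]
    norm_num
  have hzero : ∀ i : Fin d, sharpOrd (0 : Fin d → ℝ) i = 0 := fun i => by simp [sharpOrd]
  calc _ ≤ ∫ ω, expMean (G ω) * (4 * (A + B)) ∂P := by
        refine integral_mono_of_nonneg (.of_forall fun ω => ?_) hint (.of_forall fun ω => ?_)
        · refine Real.sSup_nonneg' ⟨0, ⟨0, ⟨?_, ?_⟩, ?_⟩, le_rfl⟩
          · simpa [slopeNorm, hzero] using hρ.le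
          · simpa [l2norm] using hr.le
          · simp [iprod]
        · have hT := one_le_expMean hd (G ω)
          refine Real.sSup_le ?_ (mul_nonneg (by linarith) (by linarith))
          rintro _ ⟨w, ⟨hΨ, h2⟩, rfl⟩
          have hhead := sum_sharpOrd_head_le (G ω) w h2 hk hkd
          have htail := sum_sharpOrd_tail_le hβ (G ω) w hΨ hk hkd
          have hsplit := Finset.sum_filter_add_sum_filter_not Finset.univ
            (fun i : Fin d => k ≤ (i : ℕ) + 1) (fun i => sharpOrd (G ω) i * sharpOrd w i)
          have hTB : 0 ≤ expMean (G ω) * B := mul_nonneg (by linarith) hB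
          have hre := iprod_le_sum_sharpOrd (G ω) w
          rw [← hAdef] at hhead
          rw [← hBdef] at htail
          simp only
          linarith
    _ = Real.sqrt 2 * (4 * (A + B)) := by
        rw [integral_mul_const, integral_expMean hd hG hmap]
    _ ≤ 8 * (A + B) := by nlinarith
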